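/- arXiv:math/9907090 — 2 statements merged into one kernel-verified Lean document; each statement's English description precedes it below -/
import Mathlib

section
/- Let Φ be a family of real sequences each tending to ∞. Assume Φ satisfies condition (C) and that every a ∈ Φ satisfies condition (3): there exists r > 0 such that a(n+1) − a(n) > r for all n ∈ ℕ. Then the cardinality of Φ is at least non(M), the minimum of the cardinalities of non-meagre subsets of ℝ. -/
/-!
The bridge between the two sides is Bartoszyński's description of `non(M)` by infinitely often equal
families of functions.

Each `(k, k + 1)` contains disjoint open intervals coding the natural numbers, so a function
`g : ℕ → ℕ` becomes an open set unbounded above, with one code in each `(k, k + 1)`. A sequence with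
gaps bounded below has boundedly many terms in `(k, k + 1)`; hence, by condition (C), decoding the
`c`-th such term of `a` yields an infinitely often equal family indexed by `(a, c) ∈ Φ × ℕ`.

Conversely, for every meagre `M` there are digits `z` and an increasing `H` such that a real whose
digits agree with `z` on `[k, H k)` for infinitely many `k` lies outside `M`. An infinitely often
equal family contains a function equal to `H ∘ H` infinitely often, which yields an interval
partition infinitely many of whose members contain such a `[k, H k)`. A second member of the family
guesses `z` on infinitely many of those intervals. So the pairs of members index a non-meagre set of
reals.
-/

open Filter Set

/-- The sequence `a` tends to `∞`. -/
def TendsToInfty (a : ℕ → ℝ) : Prop := Filter.Tendsto a Filter.atTop Filter.atTop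

/-- Condition (C): for every open set `U ⊆ ℝ` unbounded above, some sequence of `Φ`
has infinitely many terms in `U`. -/
def CondC (Φ : Set (ℕ → ℝ)) : Prop :=
  ∀ U : Set ℝ, IsOpen U → ¬ BddAbove U → ∃ a ∈ Φ, {n : ℕ | a n ∈ U}.Infinite

/-- Condition (1): the family `{f_a : a ∈ Φ}` is bounded with respect to eventual
domination, stated without defining `f_a`. -/
def Cond1 (Φ : Set (ℕ → ℝ)) : Prop :=
  ∃ g : ℕ → ℕ, ∀ a ∈ Φ, ∀ᶠ i : ℕ in Filter.atTop, ∀ j : ℕ, 1 ≤ j →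
    Set.Ioi (i : ℝ) ⊆ ⋃ n : ℕ, Set.Ioo (a n - 1 / j) (a n + 1 / j) → j ≤ g i

/-- Condition (2): `0 < a (n+1) - a n ≤ a n - a (n-1)` for all `n ≥ 1`. -/
def Cond2 (a : ℕ → ℝ) : Prop :=
  ∀ n : ℕ, 0 < a (n + 2) - a (n + 1) ∧ a (n + 2) - a (n + 1) ≤ a (n + 1) - a n

/-- Condition (3): the gaps of `a` are bounded below by a positive constant. -/
def Cond3 (a : ℕ → ℝ) : Prop :=
  ∃ r : ℝ, 0 < r ∧ ∀ n : ℕ, r < a (n + 1) - a n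

/-- Condition (C_m): for every interlaced pair of sequences `x, y` tending to `∞`,
some `a ∈ Φ` has, for infinitely many `k`, at least `m` terms in `(x k, y k)`. -/
def CondCm (m : ℕ) (Φ : Set (ℕ → ℝ)) : Prop :=
  ∀ x y : ℕ → ℝ, (∀ k, x k < y k) → (∀ k, y k < x (k + 1)) →
    Filter.Tendsto x Filter.atTop Filter.atTop →
    ∃ a ∈ Φ, {k : ℕ | ∃ s : Finset ℕ, m ≤ s.card ∧
      ∀ n ∈ s, a n ∈ Set.Ioo (x k) (y k)}.Infinite

/-- `non(M)`: the least cardinality of a non-meagre subset of `ℝ`. -/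
noncomputable def nonMeagreCard : Cardinal :=
  sInf {c : Cardinal | ∃ X : Set ℝ, ¬ IsMeagre X ∧ c = Cardinal.mk X}

/-- The bounding number `b`. -/
noncomputable def boundingNumber : Cardinal :=
  sInf {c : Cardinal | ∃ F : Set (ℕ → ℕ),
    (¬ ∃ g : ℕ → ℕ, ∀ f ∈ F, {i : ℕ | g i < f i}.Finite) ∧ c = Cardinal.mk F}

open Function
open scoped Cardinal Topology

lemma isMeagre_of_countable {X : Type*} [TopologicalSpace X] [T1Space X]
    [∀ x : X, NeBot (𝓝[≠] x)] {s : Set X} (hs : s.Countable) : IsMeagre s := by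
  rw [← biUnion_of_singleton s]
  refine isMeagre_biUnion hs fun x _ => IsNowhereDense.isMeagre ?_
  rw [IsNowhereDense, closure_singleton, interior_singleton]

lemma nonMeagreCard_le_mk_of_not_isMeagre {X : Set ℝ} (hX : ¬ IsMeagre X) : nonMeagreCard ≤ #X :=
  csInf_le' ⟨X, hX, rfl⟩

lemma aleph0_lt_nonMeagreCard : ℵ₀ < nonMeagreCard := by
  obtain ⟨X, hX, hcard⟩ : nonMeagreCard ∈ {c | ∃ X : Set ℝ, ¬ IsMeagre X ∧ c = #X} :=
    csInf_mem ⟨_, univ, not_isMeagre_of_isOpen isOpen_univ univ_nonempty, rfl⟩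
  rw [hcard, ← not_le, Cardinal.le_aleph0_iff_set_countable]
  exact mt isMeagre_of_countable hX

lemma nonMeagreCard_le_of_le_max_aleph0 {c : Cardinal} (h : nonMeagreCard ≤ max c ℵ₀) :
    nonMeagreCard ≤ c :=
  (le_max_iff.1 h).resolve_right aleph0_lt_nonMeagreCard.not_ge

section Digits

variable {b : ℕ}

lemma exists_rat_ofDigits_eq_add {x y : ℕ → Fin b} (h : ∀ᶠ m in atTop, x m = y m) :
    ∃ q : ℚ, Real.ofDigits x = Real.ofDigits y + q := by
  obtain ⟨k, hk⟩ := eventually_atTop.1 h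
  have htail : (fun i => x (i + k)) = fun i => y (i + k) :=
    funext fun i => hk _ (Nat.le_add_left k i)
  refine ⟨∑ i ∈ Finset.range k, ((x i : ℚ) - (y i : ℚ)) * ((b : ℚ) ^ (i + 1))⁻¹, ?_⟩
  rw [Real.ofDigits_eq_sum_add_ofDigits x k, Real.ofDigits_eq_sum_add_ofDigits y k, htail]
  simp only [Real.ofDigitsTerm, Rat.cast_sum, Rat.cast_mul, Rat.cast_sub, Rat.cast_natCast,
    Rat.cast_inv, Rat.cast_pow, sub_mul, Finset.sum_sub_distrib]
  ring

lemma eventually_forall_eqOn_ofDigits_mem {U : Set ℝ} (hU : IsOpen U) {y : ℕ → Fin b}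
    (hy : Real.ofDigits y ∈ U) :
    ∀ᶠ N in atTop, ∀ x : ℕ → Fin b, EqOn x y (Iio N) → Real.ofDigits x ∈ U := by
  obtain ⟨_, ⟨w, n, rfl⟩, hyw, hwU⟩ :=
    (PiNat.isTopologicalBasis_cylinders _).exists_subset_of_mem_open
      (show y ∈ Real.ofDigits ⁻¹' U from hy) (hU.preimage Real.continuous_ofDigits)
  filter_upwards [eventually_ge_atTop n] with N hN x hx
  exact hwU fun i hi => (hx (hi.trans_le hN)).trans (hyw i hi)

/-- There are only finitely many ways to choose the first `k` digits. -/
lemma eventually_forall_eqOn_Ico_ofDigits_mem {U : Set ℝ} (hU : IsOpen U) {z : ℕ → Fin b}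
    (hz : ∀ y : ℕ → Fin b, (∀ᶠ m in atTop, y m = z m) → Real.ofDigits y ∈ U) (k : ℕ) :
    ∀ᶠ N in atTop, ∀ x : ℕ → Fin b, EqOn x z (Ico k N) → Real.ofDigits x ∈ U := by
  let glue (s : Fin k → Fin b) (m : ℕ) : Fin b := if h : m < k then s ⟨m, h⟩ else z m
  have hglue (s) : Real.ofDigits (glue s) ∈ U := hz _ <| by
    filter_upwards [eventually_ge_atTop k] with m hm
    exact dif_neg hm.not_gt
  filter_upwards [eventually_all.2 fun s => eventually_forall_eqOn_ofDigits_mem hU (hglue s)]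
    with N hN x hx
  refine hN (fun i => x i) x fun m hm => ?_
  by_cases h : m < k
  · simp only [glue, h, dif_pos]
  · simp only [glue, h, dif_neg, not_false_eq_true, hx ⟨not_lt.1 h, hm⟩]

lemma exists_forall_add_mem_of_mem_residual {G ι : Type*} [TopologicalSpace G] [AddGroup G]
    [ContinuousAdd G] [BaireSpace G] [Countable ι] {t V : Set G} (ht : t ∈ residual G)
    (hV : IsOpen V) (hVne : V.Nonempty) (f : ι → G) : ∃ w ∈ V, ∀ i, w + f i ∈ t := by
  have hres : ∀ᶠ w in residual G, ∀ i, w + f i ∈ t := eventually_countable_forall.2 fun i =>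
    tendsto_residual_of_isOpenMap (continuous_add_const (f i)) (isOpenMap_add_right (f i)) ht
  exact (dense_of_mem_residual hres).exists_mem_open hV hVne |>.imp fun _ h => h.symm

/-- Take `z` to be the expansion of a real all of whose rational translates are generic: then
changing finitely many digits of `z` leads to generic reals only. -/
lemma exists_strictMono_forall_ofDigits_notMem (hb : 1 < b) {M : Set ℝ} (hM : IsMeagre M) :
    ∃ (z : ℕ → Fin b) (H : ℕ → ℕ), StrictMono H ∧ ∀ x : ℕ → Fin b,
      (∃ᶠ k in atTop, EqOn x z (Ico k (H k))) → Real.ofDigits x ∉ M := by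
  have : NeZero b := ⟨by omega⟩
  obtain ⟨t, htM, htG, htd⟩ := mem_residual.1 hM
  obtain ⟨U, hUo, rfl⟩ := isGδ_iff_eq_iInter_nat.1 htG
  obtain ⟨w, hw01, hw⟩ := exists_forall_add_mem_of_mem_residual
    (mem_residual.2 ⟨_, subset_rfl, htG, htd⟩) isOpen_Ioo (nonempty_Ioo.2 (zero_lt_one' ℝ))
    ((↑) : ℚ → ℝ)
  let z := Real.digits w b
  have hz : ∀ y : ℕ → Fin b, (∀ᶠ m in atTop, y m = z m) → Real.ofDigits y ∈ ⋂ n, U n := by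
    intro y hy
    obtain ⟨q, hq⟩ := exists_rat_ofDigits_eq_add hy
    rw [hq, Real.ofDigits_digits hb (Ioo_subset_Ico_self hw01)]
    exact hw q
  obtain ⟨H, hHmono, hH⟩ := extraction_forall_of_eventually fun k =>
    eventually_forall_eqOn_Ico_ofDigits_mem
      ((finite_Iic k).isOpen_biInter fun n _ => hUo n)
      (fun y hy => mem_iInter₂.2 fun n _ => mem_iInter.1 (hz y hy) n) k
  refine ⟨z, H, hHmono, fun x hx => htM (mem_iInter.2 fun n => ?_)⟩
  obtain ⟨k, hxk, hnk⟩ := (hx.and_eventually (eventually_ge_atTop n)).exists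
  exact mem_iInter₂.1 (hH k x hxk) n hnk

end Digits

lemma exists_injective_mem_of_lt_card {α : Type*} (C : ℕ → Finset α) (hC : ∀ i, i < (C i).card) :
    ∃ n : ℕ → α, Injective n ∧ ∀ i, n i ∈ C i := by
  classical
  refine (Finset.all_card_le_biUnion_card_iff_exists_injective C).1 fun s => ?_
  rcases s.eq_empty_or_nonempty with rfl | hs
  · simp
  · calc s.card ≤ s.max' hs + 1 := by
          simpa using Finset.card_le_card fun i hi =>
            Finset.mem_range_succ_iff.2 (s.le_max' i hi)
      _ ≤ (C (s.max' hs)).card := hC _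
      _ ≤ (s.biUnion C).card :=
          Finset.card_le_card (Finset.subset_biUnion_of_mem C (s.max'_mem hs))

lemma exists_forall_eqOn_of_pairwise_disjoint {ι α β : Type*} [Nonempty β] {B : ι → Set α}
    (hB : Pairwise (Disjoint on B)) (u : ι → α → β) : ∃ x : α → β, ∀ i, EqOn x (u i) (B i) := by
  have hvalue : ∀ m, ∃ v, ∀ i, m ∈ B i → v = u i m := by
    intro m
    by_cases hm : ∃ i, m ∈ B i
    · obtain ⟨i, hi⟩ := hm
      refine ⟨u i m, fun j hj => ?_⟩
      rw [hB.eq (not_disjoint_iff.2 ⟨m, hi, hj⟩)]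
    · exact ⟨Classical.arbitrary β, fun i hi => (hm ⟨i, hi⟩).elim⟩
  choose x hx using hvalue
  exact ⟨x, fun i m hm => hx m i hm⟩

lemma exists_strictMono_forall_le_apply_succ (f : ℕ → ℕ) :
    ∃ e : ℕ → ℕ, StrictMono e ∧ ∀ n, ∀ k ≤ e n, f k ≤ e (n + 1) := by
  let next (m : ℕ) : ℕ := max (partialSups f m) (m + 1)
  have hsucc (n : ℕ) : next^[n + 1] 0 = next (next^[n] 0) := iterate_succ_apply' next n 0
  refine ⟨fun n => next^[n] 0, strictMono_nat_of_lt_succ fun n => ?_, fun n k hk => ?_⟩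
  · exact (le_max_right _ _).trans_eq (hsucc n).symm
  · exact (le_partialSups_of_le f hk).trans ((le_max_left _ _).trans_eq (hsucc n).symm)

/-- If `e n < k ≤ e (n + 1)` and `H (H k) ≤ f k`, then either `H (e n) ≤ H k ≤ e (n + 1)`, or
`e (n + 1) < H k` and `H (e (n + 1)) ≤ H (H k) ≤ f k ≤ e (n + 2)`. -/
lemma frequently_apply_le_apply_succ {e f H : ℕ → ℕ} (he : StrictMono e)
    (hef : ∀ n, ∀ k ≤ e n, f k ≤ e (n + 1)) (hH : Monotone H)
    (hf : ∃ᶠ k in atTop, H (H k) ≤ f k) : ∃ᶠ n in atTop, H (e n) ≤ e (n + 1) := by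
  refine frequently_atTop.2 fun a => ?_
  obtain ⟨k, hk, hak⟩ := (hf.and_eventually (eventually_gt_atTop (e a))).exists
  obtain ⟨n, hnk, hkn⟩ := he.exists_between_of_tendsto_atTop he.tendsto_atTop
    ((he.monotone a.zero_le).trans_lt hak)
  have han : a ≤ n := Nat.lt_succ_iff.1 (he.lt_iff_lt.1 (hak.trans_le hkn))
  rcases le_or_gt (H k) (e (n + 1)) with hle | hlt
  · exact ⟨n, han, (hH hnk.le).trans hle⟩
  · exact ⟨n + 1, han.trans n.le_succ, (hH hlt.le).trans (hk.trans (hef _ k hkn))⟩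

/-- A family of sequences is infinitely often equal if every sequence agrees with some member of the
family at infinitely many indices. The `k`-th terms may lie in a type depending on `k`. -/
def IsInfinitelyOftenEqual {ι : Type*} {α : ℕ → Type*} (F : ι → ∀ k, α k) : Prop :=
  ∀ g : ∀ k, α k, ∃ p, ∃ᶠ k in atTop, F p k = g k

namespace IsInfinitelyOftenEqual

variable {ι : Type*} {F : ι → ℕ → ℕ}

lemma exists_of_countable (hF : IsInfinitelyOftenEqual F) (α : ℕ → Type*) [∀ k, Countable (α k)]
    [∀ k, Nonempty (α k)] : ∃ G : ι → ∀ k, α k, IsInfinitelyOftenEqual G := by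
  choose decode hdecode using fun k => exists_surjective_nat (α k)
  refine ⟨fun p k => decode k (F p k), fun g => ?_⟩
  choose code hcode using fun k => hdecode k (g k)
  obtain ⟨p, hp⟩ := hF code
  exact ⟨p, hp.mono fun k hk => (congrArg (decode k) hk).trans (hcode k)⟩

/-- A member of the family guesses, infinitely often at a stage `i`, the restriction of `y` to a set
of `i + 1` elements of `A`. Distinct representatives of the guessed domains assign to each stage
an argument of its own. -/
lemma exists_frequently_mem_and_eq (hF : IsInfinitelyOftenEqual F) (α : Type*) [Countable α]
    [Nonempty α] : ∃ X : ι → ℕ → α, ∀ (A : Set ℕ) (y : ℕ → α), A.Infinite →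
      ∃ p, ∃ᶠ n in atTop, n ∈ A ∧ X p n = y n := by
  have hne (i : ℕ) : Nonempty (Σ C : {C : Finset ℕ // i < C.card}, C.1 → α) :=
    ⟨⟨⟨Finset.range (i + 1), by simp⟩, fun _ => Classical.arbitrary α⟩⟩
  obtain ⟨G, hG⟩ := hF.exists_of_countable fun i => Σ C : {C : Finset ℕ // i < C.card}, C.1 → α
  choose n hinj hmem using fun p => exists_injective_mem_of_lt_card (fun i => (G p i).1.1)
    fun i => (G p i).1.2
  let X (p : ι) : ℕ → α :=
    extend (n p) (fun i => (G p i).2 ⟨n p i, hmem p i⟩) fun _ => Classical.arbitrary α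
  refine ⟨X, fun A y hA => ?_⟩
  choose C hCA hCcard using fun i => hA.exists_subset_card_eq (i + 1)
  obtain ⟨p, hp⟩ := hG fun i => ⟨⟨C i, (hCcard i).symm ▸ i.lt_succ_self⟩, fun m => y m⟩
  refine ⟨p, (hinj p).nat_tendsto_atTop.frequently (hp.mono fun i hi => ?_)⟩
  have hguess : ∀ m (hm : m ∈ (G p i).1.1), m ∈ A ∧ (G p i).2 ⟨m, hm⟩ = y m := by
    rw [hi]
    exact fun m hm => ⟨hCA i hm, rfl⟩
  have hX : X p (n p i) = (G p i).2 ⟨n p i, hmem p i⟩ := (hinj p).extend_apply _ _ i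
  exact hX ▸ hguess (n p i) (hmem p i)

lemma exists_strictMono_frequently_le (hF : IsInfinitelyOftenEqual F) :
    ∃ e : ι → ℕ → ℕ, (∀ p, StrictMono (e p)) ∧
      ∀ H : ℕ → ℕ, Monotone H → ∃ p, ∃ᶠ n in atTop, H (e p n) ≤ e p (n + 1) := by
  choose e he hef using fun p => exists_strictMono_forall_le_apply_succ (F p)
  refine ⟨e, he, fun H hH => ?_⟩
  obtain ⟨p, hp⟩ := hF (H ∘ H)
  exact ⟨p, frequently_apply_le_apply_succ (he p) (hef p) hH (hp.mono fun _ hk => hk.ge)⟩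

lemma exists_frequently_eqOn_Ico (hF : IsInfinitelyOftenEqual F) (α : Type*) [Countable α]
    [Inhabited α] : ∃ X : ι × ι → ℕ → α, ∀ (z : ℕ → α) (H : ℕ → ℕ), Monotone H →
      ∃ p, ∃ᶠ k in atTop, EqOn (X p) z (Ico k (H k)) := by
  obtain ⟨e, he, hcatch⟩ := hF.exists_strictMono_frequently_le
  obtain ⟨L, hL⟩ := hF.exists_frequently_mem_and_eq (List α)
  choose X hX using fun p : ι × ι => exists_forall_eqOn_of_pairwise_disjoint
    (he p.1).monotone.pairwise_disjoint_on_Ico_succ fun n m => (L p.2 n).getD m default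
  refine ⟨X, fun z H hH => ?_⟩
  obtain ⟨p, hp⟩ := hcatch H hH
  obtain ⟨q, hq⟩ := hL {n | H (e p n) ≤ e p (n + 1)}
    (fun n => (List.range (e p (n + 1))).map z) (Nat.frequently_atTop_iff_infinite.1 hp)
  refine ⟨(p, q), (he p).tendsto_atTop.frequently (hq.mono ?_)⟩
  rintro n ⟨hn, hLn⟩ m ⟨hnm, hmH⟩
  have hm : m < e p (n + 1) := hmH.trans_le hn
  rw [hX (p, q) n ⟨hnm, hm⟩, hLn]
  simp [hm]

lemma exists_not_isMeagre_range (hF : IsInfinitelyOftenEqual F) :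
    ∃ ψ : ι × ι → ℝ, ¬ IsMeagre (range ψ) := by
  obtain ⟨X, hX⟩ := hF.exists_frequently_eqOn_Ico (Fin 2)
  refine ⟨fun p => Real.ofDigits (X p), fun hM => ?_⟩
  obtain ⟨z, H, hH, hgeneric⟩ := exists_strictMono_forall_ofDigits_notMem one_lt_two hM
  obtain ⟨p, hp⟩ := hX z H hH.monotone
  exact hgeneric (X p) hp (mem_range_self p)

/-- The hard half of Bartoszyński's characterization of `non(M)`. -/
lemma nonMeagreCard_le_mk {ι : Type} {F : ι → ℕ → ℕ} (hF : IsInfinitelyOftenEqual F) :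
    nonMeagreCard ≤ #ι := by
  obtain ⟨ψ, hψ⟩ := hF.exists_not_isMeagre_range
  refine nonMeagreCard_le_of_le_max_aleph0 ?_
  calc nonMeagreCard ≤ #(range ψ) := nonMeagreCard_le_mk_of_not_isMeagre hψ
    _ ≤ #(ι × ι) := Cardinal.mk_range_le
    _ = #ι * #ι := (Cardinal.mul_def _ _).symm
    _ ≤ max #ι ℵ₀ := by simpa only [max_self] using Cardinal.mul_le_max #ι #ι

end IsInfinitelyOftenEqual

/-- The open interval of those `y ∈ (t, t + 1)` that code the number `v`, in the sense that
`v + 1 < (y - t)⁻¹ < v + 2`. -/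
def codeInterval (t : ℝ) (v : ℕ) : Set ℝ := Ioo (t + ((v : ℝ) + 2)⁻¹) (t + ((v : ℝ) + 1)⁻¹)

/-- The number coded by the point `y` of `(t, t + 1)`. -/
noncomputable def decode (t y : ℝ) : ℕ := ⌊(y - t)⁻¹⌋₊ - 1

lemma codeInterval_nonempty (t : ℝ) (v : ℕ) : (codeInterval t v).Nonempty := by
  refine nonempty_Ioo.2 ?_
  gcongr
  norm_num

lemma codeInterval_subset_Ioo (t : ℝ) (v : ℕ) : codeInterval t v ⊆ Ioo t (t + 1) := by
  refine Ioo_subset_Ioo ?_ ?_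
  · simp only [le_add_iff_nonneg_right]
    positivity
  · gcongr
    exact inv_le_one_of_one_le₀ (by simp)

lemma decode_of_mem_codeInterval {t y : ℝ} {v : ℕ} (hy : y ∈ codeInterval t v) :
    decode t y = v := by
  have hpos : 0 < y - t := sub_pos.2 (codeInterval_subset_Ioo t v hy).1
  have hlower : (v : ℝ) + 1 < (y - t)⁻¹ :=
    (lt_inv_comm₀ (by positivity) hpos).2 (sub_lt_iff_lt_add'.2 hy.2)
  have hupper : (y - t)⁻¹ < (v : ℝ) + 2 :=
    (inv_lt_comm₀ hpos (by positivity)).2 (lt_sub_iff_add_lt'.2 hy.1)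
  have hfloor : ⌊(y - t)⁻¹⌋₊ = v + 1 := by
    rw [Nat.floor_eq_iff (by positivity)]
    push_cast
    constructor <;> linarith
  rw [decode, hfloor, Nat.add_sub_cancel]

lemma CondC.exists_frequently_mem_codeInterval {Φ : Set (ℕ → ℝ)} (hC : CondC Φ)
    (hΦ : ∀ a ∈ Φ, TendsToInfty a) (g : ℕ → ℕ) :
    ∃ a ∈ Φ, ∃ᶠ k : ℕ in atTop, ∃ n, a n ∈ codeInterval k (g k) := by
  have hunbdd : ¬ BddAbove (⋃ k : ℕ, codeInterval k (g k)) := by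
    rintro ⟨B, hB⟩
    obtain ⟨k, hk⟩ := exists_nat_gt B
    obtain ⟨y, hy⟩ := codeInterval_nonempty k (g k)
    exact (hk.trans (codeInterval_subset_Ioo _ _ hy).1).not_ge (hB (mem_iUnion.2 ⟨k, hy⟩))
  obtain ⟨a, ha, hinf⟩ := hC _ (isOpen_iUnion fun k => isOpen_Ioo) hunbdd
  refine ⟨a, ha, frequently_atTop.2 fun K => ?_⟩
  obtain ⟨n, hnU, hKn⟩ := ((Nat.frequently_atTop_iff_infinite.2 hinf).and_eventually
    ((hΦ a ha).eventually_ge_atTop ((K : ℝ) + 1))).exists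
  obtain ⟨k, hk⟩ := mem_iUnion.1 hnU
  have hKk : (K : ℝ) < k := by linarith [(codeInterval_subset_Ioo _ _ hk).2]
  exact ⟨k, by exact_mod_cast hKk.le, n, hk⟩

/-- The first index at which the sequence `a` is at least `t`, and `0` if there is none. -/
noncomputable def firstIndexGE (a : ℕ → ℝ) (t : ℝ) : ℕ := sInf {n | t ≤ a n}

lemma Cond3.exists_eq_firstIndexGE_add {a : ℕ → ℝ} (ha : Cond3 a) :
    ∃ N : ℕ, ∀ (t : ℝ) (n : ℕ), a n ∈ Ioo t (t + 1) → ∃ c < N, n = firstIndexGE a t + c := by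
  obtain ⟨r, hr, hgap⟩ := ha
  have hgaps (m c : ℕ) : a m + c * r ≤ a (m + c) := by
    induction c with
    | zero => simp
    | succ c ih =>
      push_cast
      rw [← add_assoc]
      linarith [hgap (m + c)]
  obtain ⟨N, hN⟩ := exists_nat_gt (1 / r)
  refine ⟨N, fun t n hn => ?_⟩
  have hfirst : t ≤ a (firstIndexGE a t) := Nat.sInf_mem (s := {n | t ≤ a n}) ⟨n, hn.1.le⟩
  obtain ⟨c, hc⟩ := Nat.exists_eq_add_of_le (show firstIndexGE a t ≤ n from Nat.sInf_le hn.1.le)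
  have hcr : (c : ℝ) * r < 1 := by linarith [hgaps (firstIndexGE a t) c, hc ▸ hn.2]
  exact ⟨c, by exact_mod_cast ((lt_div_iff₀ hr).2 hcr).trans hN, hc⟩

lemma isInfinitelyOftenEqual_decode {Φ : Set (ℕ → ℝ)} (hΦ : ∀ a ∈ Φ, TendsToInfty a)
    (hC : CondC Φ) (h3 : ∀ a ∈ Φ, Cond3 a) :
    IsInfinitelyOftenEqual fun (p : Φ × ℕ) k => decode k (p.1.1 (firstIndexGE p.1.1 k + p.2)) := by
  intro g
  obtain ⟨a, ha, hfreq⟩ := hC.exists_frequently_mem_codeInterval hΦ g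
  obtain ⟨N, hN⟩ := (h3 a ha).exists_eq_firstIndexGE_add
  have hoffset : ∃ᶠ k : ℕ in atTop, ∃ c ∈ Iio N, decode k (a (firstIndexGE a k + c)) = g k := by
    refine hfreq.mono fun k ⟨n, hn⟩ => ?_
    obtain ⟨c, hcN, rfl⟩ := hN k n (codeInterval_subset_Ioo _ _ hn)
    exact ⟨c, hcN, decode_of_mem_codeInterval hn⟩
  obtain ⟨c, -, hc⟩ := (frequently_exists_finite (finite_Iio N)).1 hoffset
  exact ⟨(⟨a, ha⟩, c), hc⟩

theorem remark4 (Φ : Set (ℕ → ℝ)) (hΦ : ∀ a ∈ Φ, TendsToInfty a)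
    (hC : CondC Φ) (h3 : ∀ a ∈ Φ, Cond3 a) :
    nonMeagreCard ≤ Cardinal.mk Φ := by
  refine nonMeagreCard_le_of_le_max_aleph0 ?_
  calc nonMeagreCard ≤ #(Φ × ℕ) := (isInfinitelyOftenEqual_decode hΦ hC h3).nonMeagreCard_le_mk
    _ = #Φ * ℵ₀ := by rw [← Cardinal.mul_def, Cardinal.mk_nat]
    _ ≤ max #Φ ℵ₀ := by simpa only [max_assoc, max_self] using Cardinal.mul_le_max #Φ ℵ₀
end

section
/- Let Φ be a family of real sequences each tending to ∞. Assume Φ satisfies condition (C) and Φ does NOT satisfy condition (C_2). Then the cardinality of Φ is at least non(M), the minimum of the cardinalities of non-meagre subsets of ℝ. -/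
/-!
Since (C_m) fails, there are intervals `(x k, y k)` such that every `a ∈ Φ` has fewer than `m`
terms in `(x k, y k)` for almost all `k`. Colour each interval by `ℕ` so that every colour class has
nonempty interior, and let `f (a, r) k` be the colour of the `r`-th term of `a` in `(x k, y k)`,
for `r < m`. For `g : ℕ → ℕ` and an infinite `P ⊆ ℕ`, condition (C), applied to the union over
`k ∈ P` of the interior of the class of colour `g k`, yields `a` and, by the pigeonhole principle,
`r` such that `f (a, r) k = g k` for infinitely many `k ∈ P`.

By an argument of Bartoszyński, such a family, indexed by `ι`, gives a non-meagre set of reals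
indexed by `ι × ι`. Given a decreasing sequence of dense open sets `D p`, there are finite words
`w p` such that every real whose binary expansion contains `w p` from position `p` on lies in `D p`.
One index provides cut points `m 0 < m 1 < …` for which `w (m k)` fits between `m k` and `m (k + 1)`
for infinitely many `k`; a second one guesses `w (m k)` for infinitely many of these `k`. The
guessed words, written between the cut points, form the expansion of a real in every `D p`.
-/

open Filter Set

lemma exists_forall_eventually_le_of_eventually_succ_le (ψ : ℕ → ℕ) :
    ∃ h : ℕ → ℕ, ∀ m : ℕ → ℕ, (∀ᶠ k in atTop, m (k + 1) ≤ ψ (m k)) → ∀ᶠ k in atTop, m k ≤ h k := by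
  let Ψ : ℕ →o ℕ := partialSups (ψ ⊔ id)
  have hψΨ (n : ℕ) : ψ n ≤ Ψ n := le_sup_left.trans (le_partialSups (ψ ⊔ id) n)
  have hidΨ : id ≤ Ψ := le_sup_right.trans (le_partialSups (ψ ⊔ id))
  refine ⟨fun k => Ψ^[k] k, fun m hm => ?_⟩
  obtain ⟨K, hK⟩ := eventually_atTop.1 hm
  filter_upwards [eventually_ge_atTop K, eventually_ge_atTop (m K)] with k hKk hmk
  obtain ⟨l, rfl⟩ := Nat.exists_eq_add_of_le hKk
  calc m (K + l) ≤ Ψ^[l] (K + l) :=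
        Ψ.monotone.seq_le_seq (x := fun j => m (K + j)) (y := fun j => Ψ^[j] (K + l)) l hmk
          (fun j _ => (hK (K + j) (Nat.le_add_right K j)).trans (hψΨ _))
          fun j _ => (Function.iterate_succ_apply' Ψ j _).ge
    _ ≤ Ψ^[K + l] (K + l) :=
        Function.monotone_iterate_of_id_le hidΨ (Nat.le_add_left l K) (K + l)

lemma exists_strictMono_frequently_le_succ {ι : Type*} {f : ι → ℕ → ℕ}
    (hf : ∀ g : ℕ → ℕ, ∃ i, ∃ᶠ k in atTop, g k ≤ f i k) :
    ∃ m : ι → ℕ → ℕ, (∀ i, StrictMono (m i)) ∧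
      ∀ ψ : ℕ → ℕ, ∃ i, ∃ᶠ k in atTop, ψ (m i k) ≤ m i (k + 1) := by
  let m (i : ι) (k : ℕ) : ℕ := ∑ j ∈ Finset.range k, (f i j + 1)
  have hm_succ (i : ι) (k : ℕ) : m i (k + 1) = m i k + (f i k + 1) := Finset.sum_range_succ _ k
  refine ⟨m, fun i => strictMono_nat_of_lt_succ fun k => by rw [hm_succ]; omega, fun ψ => ?_⟩
  obtain ⟨h, hh⟩ := exists_forall_eventually_le_of_eventually_succ_le ψ
  -- Cut points violating the claim are dominated by `h`, although `f i k < m i (k + 1)`.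
  obtain ⟨i, hi⟩ := hf fun k => h (k + 1)
  refine ⟨i, fun hlt => hi ?_⟩
  have hmh : ∀ᶠ k in atTop, m i k ≤ h k := hh (m i) (hlt.mono fun k hk => (not_le.1 hk).le)
  filter_upwards [(tendsto_add_atTop_nat 1).eventually hmh] with k hk
  rw [hm_succ] at hk
  omega

/-- The family `f` is infinitely often equal on every infinite set of arguments: inside any infinite
subset of `ℕ`, here given by a predicate `P`, every function agrees infinitely often with some
member of `f`. Such families witness that `ι × ι` indexes a non-meagre set of reals. -/
def IsHereditarilyIOE {ι β : Type*} (f : ι → ℕ → β) : Prop :=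
  ∀ (g : ℕ → β) (P : ℕ → Prop), (∃ᶠ k in atTop, P k) → ∃ i, ∃ᶠ k in atTop, P k ∧ f i k = g k

namespace IsHereditarilyIOE

variable {ι β γ : Type*}

lemma map_surjective {f : ι → ℕ → β} (hf : IsHereditarilyIOE f) {e : β → γ}
    (he : Function.Surjective e) : IsHereditarilyIOE fun i k => e (f i k) := by
  intro g P hP
  obtain ⟨i, hi⟩ := hf (fun k => Function.surjInv he (g k)) P hP
  refine ⟨i, hi.mono fun k hk => ⟨hk.1, ?_⟩⟩
  simp only [hk.2, Function.surjInv_eq he]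

lemma exists_frequently_eq {f : ι → ℕ → β} (hf : IsHereditarilyIOE f) (g : ℕ → β) :
    ∃ i, ∃ᶠ k in atTop, f i k = g k := by
  simpa only [true_and] using hf g (fun _ => True) (Frequently.of_forall fun _ => trivial)

lemma infinite_index {f : ι → ℕ → ℕ} (hf : IsHereditarilyIOE f) : Infinite ι := by
  by_contra hι
  rw [not_infinite_iff_finite] at hι
  choose g hg using fun k => (Set.finite_range fun i => f i k).bddAbove
  obtain ⟨i, hi⟩ := hf.exists_frequently_eq fun k => g k + 1
  obtain ⟨k, hk⟩ := hi.exists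
  have hle : f i k ≤ g k := hg k (mem_range_self i)
  omega

end IsHereditarilyIOE

lemma exists_forall_blocks_eq {α : Type*} {m : ℕ → ℕ} (hm : StrictMono m) (w : ℕ → ℕ → α) :
    ∃ z : ℕ → α, ∀ k i, m k + i < m (k + 1) → z (m k + i) = w k i := by
  let block (p : ℕ) : ℕ := Nat.findGreatest (fun k => m k ≤ p) p
  refine ⟨fun p => w (block p) (p - m (block p)), fun k i hi => ?_⟩
  have hblock : block (m k + i) = k := by
    refine Nat.findGreatest_eq_iff.2 ⟨hm.le_apply.trans (Nat.le_add_right _ _),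
      fun _ => Nat.le_add_right _ _, fun n hkn _ hn => ?_⟩
    exact (hi.trans_le (hm.monotone hkn)).not_ge hn
  simp only [hblock, Nat.add_sub_cancel_left]

section Digits

variable {b : ℕ}

lemma exists_isOpen_dense_forall_ofDigits_mem (hb : 0 < b) {D : Set ℝ} (hDo : IsOpen D)
    (hDd : Dense D) (m : ℕ) :
    ∃ W : Set ℝ, IsOpen W ∧ Dense W ∧ ∀ z : ℕ → Fin b,
      Real.ofDigits (fun i => z (i + m)) ∈ W → Real.ofDigits z ∈ D := by
  have hbm : ((b : ℝ) ^ m)⁻¹ ≠ 0 := by positivity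
  let prepend (t : Fin m → Fin b) : ℝ ≃ₜ ℝ :=
    affineHomeomorph ((b : ℝ) ^ m)⁻¹ (∑ i : Fin m, (t i : ℝ) * ((b : ℝ) ^ ((i : ℕ) + 1))⁻¹) hbm
  have hopen (t : Fin m → Fin b) : IsOpen (prepend t ⁻¹' D) := hDo.preimage (prepend t).continuous
  refine ⟨⋂ t, prepend t ⁻¹' D, isOpen_iInter_of_finite hopen,
    dense_iInter_of_isOpen hopen fun t => hDd.preimage (prepend t).isOpenMap, fun z hz => ?_⟩
  have hprepend : Real.ofDigits z =
      prepend (fun i => z i) (Real.ofDigits fun i => z (i + m)) := by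
    rw [Real.ofDigits_eq_sum_add_ofDigits z m, Finset.sum_range, add_comm]
    rfl
  rw [hprepend]
  exact mem_iInter.1 hz _

lemma exists_word_forall_ofDigits_mem (hb : 1 < b) {W : Set ℝ} (hWo : IsOpen W)
    (hW : (W ∩ Icc 0 1).Nonempty) :
    ∃ w : List (Fin b), ∀ z : ℕ → Fin b, (∀ i (hi : i < w.length), z i = w[i]) →
      Real.ofDigits z ∈ W := by
  obtain ⟨y, hyW, hy⟩ := hW
  obtain ⟨s, -, rfl⟩ := Real.ofDigits_SurjOn hb hy
  obtain ⟨ε, hε, hball⟩ := Metric.isOpen_iff.1 hWo _ hyW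
  obtain ⟨l, hl⟩ := exists_pow_lt_of_lt_one hε (inv_lt_one_of_one_lt₀ (Nat.one_lt_cast.2 hb))
  refine ⟨List.ofFn fun i : Fin l => s i, fun z hz => hball ?_⟩
  simp only [List.length_ofFn, List.getElem_ofFn] at hz
  calc dist (Real.ofDigits z) (Real.ofDigits s) ≤ ((b : ℝ) ^ l)⁻¹ :=
        Real.abs_ofDigits_sub_ofDigits_le hz
    _ = (b : ℝ)⁻¹ ^ l := (inv_pow _ _).symm
    _ < ε := hl

lemma exists_word_forall_ofDigits_mem_of_dense (hb : 1 < b) {D : Set ℝ} (hDo : IsOpen D)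
    (hDd : Dense D) (m : ℕ) :
    ∃ w : List (Fin b), ∀ z : ℕ → Fin b, (∀ i (hi : i < w.length), z (m + i) = w[i]) →
      Real.ofDigits z ∈ D := by
  obtain ⟨W, hWo, hWd, hWD⟩ :=
    exists_isOpen_dense_forall_ofDigits_mem (zero_lt_one.trans hb) hDo hDd m
  obtain ⟨y, hyW, hy⟩ := hWd.exists_between (zero_lt_one' ℝ)
  obtain ⟨w, hw⟩ := exists_word_forall_ofDigits_mem hb hWo ⟨y, hyW, Ioo_subset_Icc_self hy⟩
  refine ⟨w, fun z hz => hWD z (hw _ fun i hi => ?_)⟩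
  rw [add_comm, hz i hi]

end Digits

lemma exists_antitone_isOpen_dense_of_isMeagre {X : Type*} [TopologicalSpace X] [BaireSpace X]
    {s : Set X} (hs : IsMeagre s) :
    ∃ D : ℕ → Set X, Antitone D ∧ (∀ n, IsOpen (D n)) ∧ (∀ n, Dense (D n)) ∧
      Disjoint s (⋂ n, D n) := by
  obtain ⟨t, hts, htG, htd⟩ := mem_residual.1 hs
  obtain ⟨U, hUo, rfl⟩ := htG.eq_iInter_nat
  refine ⟨dissipate U, antitone_dissipate, fun n => ?_,
    fun n => htd.mono (iInter_subset_dissipate n), ?_⟩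
  · exact (finite_Iic n).isOpen_biInter fun i _ => hUo i
  · rw [iInter_dissipate]
    exact subset_compl_iff_disjoint_left.1 hts

lemma IsHereditarilyIOE.exists_not_isMeagre_range {ι : Type*} {f : ι → ℕ → ℕ}
    (hf : IsHereditarilyIOE f) : ∃ r : ι × ι → ℝ, ¬ IsMeagre (range r) := by
  have hunbounded (g : ℕ → ℕ) : ∃ i, ∃ᶠ k in atTop, g k ≤ f i k :=
    (hf.exists_frequently_eq g).imp fun _ hi => hi.mono fun _ hk => hk.ge
  obtain ⟨m, hm, hcut⟩ := exists_strictMono_frequently_le_succ hunbounded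
  obtain ⟨word, hword⟩ := exists_surjective_nat (List (Fin 2))
  choose z hz using fun q : ι × ι =>
    exists_forall_blocks_eq (hm q.1) fun k i => (word (f q.2 k)).getD i 0
  refine ⟨fun q => Real.ofDigits (z q), fun hmeagre => ?_⟩
  obtain ⟨D, hDanti, hDo, hDd, hdisj⟩ := exists_antitone_isOpen_dense_of_isMeagre hmeagre
  choose w hw using fun p : ℕ =>
    exists_word_forall_ofDigits_mem_of_dense one_lt_two (hDo p) (hDd p) p
  obtain ⟨i, hfit⟩ := hcut fun p => p + (w p).length
  obtain ⟨j, hguess⟩ := hf.map_surjective hword (fun k => w (m i k)) _ hfit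
  refine disjoint_left.1 hdisj (mem_range_self (i, j)) (mem_iInter.2 fun n => ?_)
  obtain ⟨k, hnk, hfit_k, hguess_k⟩ := frequently_atTop.1 hguess n
  refine hDanti (hnk.trans (hm i).le_apply) (hw (m i k) _ fun l hl => ?_)
  calc z (i, j) (m i k + l) = (word (f j k)).getD l 0 :=
        hz (i, j) k l ((Nat.add_lt_add_left hl _).trans_le hfit_k)
    _ = (w (m i k)).getD l 0 := congrArg (List.getD · l 0) hguess_k
    _ = (w (m i k))[l] := List.getD_eq_getElem _ _ hl

lemma IsHereditarilyIOE.nonMeagreCard_le {ι : Type} {f : ι → ℕ → ℕ} (hf : IsHereditarilyIOE f) :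
    nonMeagreCard ≤ Cardinal.mk ι := by
  have : Infinite ι := hf.infinite_index
  obtain ⟨r, hr⟩ := hf.exists_not_isMeagre_range
  calc nonMeagreCard ≤ Cardinal.mk (range r) := csInf_le' ⟨_, hr, rfl⟩
    _ ≤ Cardinal.mk (ι × ι) := Cardinal.mk_range_le
    _ = Cardinal.mk ι := by
      rw [← Cardinal.mul_def, Cardinal.mul_eq_self (Cardinal.aleph0_le_mk ι)]

section ConditionC

lemma exists_nat_coloring_nonempty_interior {α : Type*} [LinearOrder α] [DenselyOrdered α]
    [TopologicalSpace α] [OrderClosedTopology α] {x y : α} (hxy : x < y) :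
    ∃ c : α → ℕ, ∀ j, (interior (Ioo x y ∩ c ⁻¹' {j})).Nonempty := by
  have : Nonempty (Ioo x y) := (nonempty_Ioo.2 hxy).to_subtype
  obtain ⟨u, hu⟩ := Nat.exists_strictMono (Ioo x y)
  refine ⟨fun t => sInf {j | t < u (j + 1)}, fun j => ?_⟩
  have hpiece : Ioo (u j : α) (u (j + 1)) ⊆
      Ioo x y ∩ (fun t : α => sInf {j | t < u (j + 1)}) ⁻¹' {j} := by
    intro t ht
    refine ⟨⟨(u j).2.1.trans ht.1, ht.2.trans (u (j + 1)).2.2⟩, IsLeast.csInf_eq ⟨ht.2, ?_⟩⟩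
    intro i hi
    exact Nat.lt_succ_iff.1 (hu.lt_iff_lt.1 (Subtype.coe_lt_coe.1 (ht.1.trans hi)))
  exact (nonempty_Ioo.2 (Subtype.coe_lt_coe.2 (hu j.lt_succ_self))).mono
    (interior_maximal hpiece isOpen_Ioo)

variable {Φ : Set (ℕ → ℝ)}

lemma CondC.exists_frequently_mem (hC : CondC Φ) (hΦ : ∀ a ∈ Φ, TendsToInfty a) {x y : ℕ → ℝ}
    (hx : Tendsto x atTop atTop) {V : ℕ → Set ℝ} (hVo : ∀ k, IsOpen (V k))
    (hVne : ∀ k, (V k).Nonempty) (hVsub : ∀ k, V k ⊆ Ioo (x k) (y k)) {P : ℕ → Prop}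
    (hP : ∃ᶠ k in atTop, P k) :
    ∃ a ∈ Φ, ∃ᶠ k in atTop, P k ∧ ∃ n, a n ∈ V k := by
  have hunbounded : ¬ BddAbove (⋃ k, ⋃ _ : P k, V k) := by
    rintro ⟨B, hB⟩
    obtain ⟨k, hk, hBk⟩ := (hP.and_eventually (hx.eventually_gt_atTop B)).exists
    obtain ⟨t, ht⟩ := hVne k
    exact (hB (mem_iUnion₂.2 ⟨k, hk, ht⟩)).not_gt (hBk.trans (hVsub k ht).1)
  obtain ⟨a, ha, hinf⟩ := hC _ (isOpen_iUnion fun k => isOpen_iUnion fun _ => hVo k) hunbounded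
  refine ⟨a, ha, frequently_atTop.2 fun K => ?_⟩
  obtain ⟨B, hB⟩ := ((finite_Iio K).image y).bddAbove
  obtain ⟨n, hn, hBn⟩ := ((Nat.frequently_atTop_iff_infinite.2 hinf).and_eventually
    ((hΦ a ha).eventually_gt_atTop B)).exists
  obtain ⟨k, hk, hnk⟩ := mem_iUnion₂.1 hn
  refine ⟨k, not_lt.1 fun hkK => ?_, hk, n, hnk⟩
  exact (hB (mem_image_of_mem y hkK)).not_gt (hBn.trans (hVsub k hnk).2)

lemma CondC.exists_isHereditarilyIOE (hC : CondC Φ) (hΦ : ∀ a ∈ Φ, TendsToInfty a) {m : ℕ}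
    (hnCm : ¬ CondCm m Φ) : ∃ f : Φ × Fin m → ℕ → ℕ, IsHereditarilyIOE f := by
  classical
  simp only [CondCm, not_forall, not_exists, not_and] at hnCm
  obtain ⟨x, y, hxy, -, hx, hfew⟩ := hnCm
  choose c hc using fun k => exists_nat_coloring_nonempty_interior (hxy k)
  -- If there is no `q.2`-th term in the interval, `Nat.nth` has a junk value; this is harmless.
  refine ⟨fun q k => c k (q.1.1 (Nat.nth (fun n => q.1.1 n ∈ Ioo (x k) (y k)) q.2)),
    fun g P hP => ?_⟩
  obtain ⟨a, ha, hhit⟩ := hC.exists_frequently_mem hΦ hx (fun _ => isOpen_interior)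
    (fun k => hc k (g k)) (fun k => interior_subset.trans inter_subset_left) hP
  have hfew_a := not_frequently.1 (Nat.frequently_atTop_iff_infinite.not.2 (hfew a ha))
  suffices h : ∃ᶠ k in atTop, ∃ r : Fin m,
      P k ∧ c k (a (Nat.nth (fun n => a n ∈ Ioo (x k) (y k)) r)) = g k by
    obtain ⟨r, hr⟩ := frequently_exists.1 h
    exact ⟨(⟨a, ha⟩, r), hr⟩
  refine (hhit.and_eventually hfew_a).mono ?_
  rintro k ⟨⟨hPk, n, hn⟩, hk⟩
  obtain ⟨hnI, hnc⟩ := interior_subset hn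
  have hcount : Nat.count (fun n => a n ∈ Ioo (x k) (y k)) n < m := by
    by_contra! hle
    rw [Nat.count_eq_card_filter_range] at hle
    exact hk ⟨_, hle, fun l hl => (Finset.mem_filter.1 hl).2⟩
  refine ⟨⟨_, hcount⟩, hPk, ?_⟩
  rwa [Nat.nth_count hnI]

end ConditionC

theorem remark6_general {m : ℕ} {Φ : Set (ℕ → ℝ)} (hΦ : ∀ a ∈ Φ, TendsToInfty a)
    (hC : CondC Φ) (hnCm : ¬ CondCm m Φ) :
    nonMeagreCard ≤ Cardinal.mk Φ := by
  obtain ⟨f, hf⟩ := hC.exists_isHereditarilyIOE hΦ hnCm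
  have hprod : Infinite (Φ × Fin m) := hf.infinite_index
  have hΦinf : Infinite Φ := by
    by_contra hfin
    rw [not_infinite_iff_finite] at hfin
    exact not_finite (Φ × Fin m)
  calc nonMeagreCard ≤ Cardinal.mk (Φ × Fin m) := hf.nonMeagreCard_le
    _ = Cardinal.mk Φ * m := by simp
    _ ≤ Cardinal.mk Φ * Cardinal.mk Φ := by
      gcongr
      exact (Cardinal.natCast_lt_aleph0 (n := m)).le.trans (Cardinal.aleph0_le_mk Φ)
    _ = Cardinal.mk Φ := Cardinal.mul_eq_self (Cardinal.aleph0_le_mk Φ)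

theorem remark6 (Φ : Set (ℕ → ℝ)) (hΦ : ∀ a ∈ Φ, TendsToInfty a)
    (hC : CondC Φ) (hnC2 : ¬ CondCm 2 Φ) :
    nonMeagreCard ≤ Cardinal.mk Φ :=
  remark6_general hΦ hC hnC2
end
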